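/- Let L ⊆ ℝ^n be a star set with Borel measurable radial function ρ_L, and let m > 0 be real. Define the m-th dual volume of the central section by Ṽ_m(L ∩ w^⊥) = b_{n−1} · (F ρ_L^m)(w), where (F ρ_L^m)(w) is the average of ρ_L^m over the great subsphere S^{n-1} ∩ w^⊥. Then ∫_{S^{n-1}} Ṽ_m(L ∩ w^⊥) · (1 − w_n²)^{−(n−1)/2} d*w = b_{n−1} · ∫_{S^{n-1}} ρ_L(θ)^m |θ_n|^{−1} d*θ, the equality holding in [0,∞]. (Case k = n−1 of the paper's identity ∫_{G_{n,k}} Ṽ_m(L ∩ τ₀) (cos d(τ₀))^{−(n−1)} d*τ₀ = b_k ∫_{S^{n-1}} ρ_L^m(θ) |θ_n|^{−(n−k)} d*θ.) -/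

import Mathlib

open MeasureTheory Metric Real
open scoped ENNReal NNReal

noncomputable section

/-- The normalized (probability) surface measure `d*θ` on the unit sphere of
`EuclideanSpace ℝ (Fin n)`. -/
def sphMeasure (n : ℕ) : Measure (sphere (0 : EuclideanSpace ℝ (Fin n)) 1) :=
  ((volume : Measure (EuclideanSpace ℝ (Fin n))).toSphere Set.univ)⁻¹ •
    (volume : Measure (EuclideanSpace ℝ (Fin n))).toSphere

/-- The hyperplane Radon transform: `Rf(θ,t) = ∫_{θ^⊥} f(tθ + y) dy`, where `θ^⊥` carries its
canonical Lebesgue measure as an (n-1)-dimensional inner product space. -/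
def Radon (n : ℕ) (f : EuclideanSpace ℝ (Fin n) → ℝ≥0∞)
    (θ : sphere (0 : EuclideanSpace ℝ (Fin n)) 1) (t : ℝ) : ℝ≥0∞ :=
  ∫⁻ y : ((ℝ ∙ (θ : EuclideanSpace ℝ (Fin n)))ᗮ),
    f (t • (θ : EuclideanSpace ℝ (Fin n)) + (y : EuclideanSpace ℝ (Fin n)))

/-- The codimension-one Funk transform: the average of `φ` over the great subsphere
`S^{n-1} ∩ w^⊥` (the unit sphere of the subspace `w^⊥`, with its normalized surface
measure). -/
def Funk (n : ℕ) (φ : sphere (0 : EuclideanSpace ℝ (Fin n)) 1 → ℝ≥0∞)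
    (w : sphere (0 : EuclideanSpace ℝ (Fin n)) 1) : ℝ≥0∞ :=
  ((volume : Measure ((ℝ ∙ (w : EuclideanSpace ℝ (Fin n)))ᗮ)).toSphere Set.univ)⁻¹ *
    ∫⁻ v : sphere (0 : ((ℝ ∙ (w : EuclideanSpace ℝ (Fin n)))ᗮ)) 1,
      φ ⟨((v : ((ℝ ∙ (w : EuclideanSpace ℝ (Fin n)))ᗮ)) : EuclideanSpace ℝ (Fin n)), by
          have hv := v.2
          simp only [mem_sphere_iff_norm, sub_zero] at hv ⊢
          rwa [Submodule.coe_norm] at hv⟩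
      ∂((volume : Measure ((ℝ ∙ (w : EuclideanSpace ℝ (Fin n)))ᗮ)).toSphere)

/-- `b_m = π^{m/2}/Γ(m/2+1)`, the volume of the m-dimensional unit ball. -/
def ballVol (m : ℕ) : ℝ := Real.pi ^ ((m : ℝ) / 2) / Real.Gamma ((m : ℝ) / 2 + 1)

/-- The radial function of a star set: `ρ_L(θ) = sup {c ≥ 0 : cθ ∈ L} ∈ [0,∞]`. -/
def radial (n : ℕ) (L : Set (EuclideanSpace ℝ (Fin n)))
    (θ : sphere (0 : EuclideanSpace ℝ (Fin n)) 1) : ℝ≥0∞ :=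
  ⨆ r : {r : ℝ≥0 // (r : ℝ) • (θ : EuclideanSpace ℝ (Fin n)) ∈ L}, (r.1 : ℝ≥0∞)


section aux
variable {E : Type*} [NormedAddCommGroup E] [InnerProductSpace ℝ E] [FiniteDimensional ℝ E]
  [MeasurableSpace E] [BorelSpace E]

/-- Orthogonal decomposition along a unit vector preserves volume. -/
lemma aux_decomp (u : E) (hu : ‖u‖ = 1) :
    MeasurePreserving (fun p : (ℝ ∙ u)ᗮ × ℝ => (p.1 : E) + p.2 • u) (volume.prod volume) volume := by
  have h1 := ((ℝ ∙ u).orthogonalDecomposition).symm.measurePreserving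
  have h2 := WithLp.volume_preserving_toLp (ℝ ∙ u) ((ℝ ∙ u)ᗮ)
  have h3 := (LinearIsometryEquiv.toSpanUnitSingleton (𝕜 := ℝ) u hu).measurePreserving
  have h4 : MeasurePreserving (Prod.map (LinearIsometryEquiv.toSpanUnitSingleton (𝕜 := ℝ) u hu)
      (id : (ℝ ∙ u)ᗮ → (ℝ ∙ u)ᗮ)) (volume.prod volume) (volume.prod volume) :=
    h3.prod (MeasurePreserving.id _)
  have h5 : MeasurePreserving (Prod.swap : (ℝ ∙ u)ᗮ × ℝ → ℝ × (ℝ ∙ u)ᗮ) (volume.prod volume)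
    (volume.prod volume) := Measure.measurePreserving_swap
  have h6 := h1.comp (h2.comp (h4.comp h5))
  have heq : (fun p : (ℝ ∙ u)ᗮ × ℝ => (p.1 : E) + p.2 • u) =
      (ℝ ∙ u).orthogonalDecomposition.symm ∘ WithLp.toLp 2 ∘
      Prod.map (LinearIsometryEquiv.toSpanUnitSingleton (𝕜 := ℝ) u hu) id ∘ Prod.swap := by
    ext p
    rw [add_comm]
    rfl
  rw [heq]
  exact h6

lemma aux_lint_decomp (u : E) (hu : ‖u‖ = 1) (f : E → ℝ≥0∞) (hf : Measurable f) :
    ∫⁻ x, f x = ∫⁻ y : (ℝ ∙ u)ᗮ, ∫⁻ s : ℝ, f ((y : E) + s • u) := by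
  rw [← (aux_decomp u hu).lintegral_comp hf, lintegral_prod]
  exact (hf.comp (aux_decomp u hu).measurable).aemeasurable

lemma aux_lint_decomp' (u : E) (hu : ‖u‖ = 1) (f : E → ℝ≥0∞) (hf : Measurable f) :
    ∫⁻ x, f x = ∫⁻ s : ℝ, ∫⁻ y : (ℝ ∙ u)ᗮ, f ((y : E) + s • u) := by
  rw [← (aux_decomp u hu).lintegral_comp hf, lintegral_prod_symm]
  exact (hf.comp (aux_decomp u hu).measurable).aemeasurable

lemma aux_polar (f : E → ℝ≥0∞) (hf : Measurable f) [Nontrivial E] :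
    ∫⁻ x, f x = ∫⁻ θ, (∫⁻ r in Set.Ioi (0:ℝ),
      ENNReal.ofReal (r ^ (Module.finrank ℝ E - 1)) * f (r • (θ : E)))
        ∂(volume : Measure E).toSphere := by
  have h := (volume : Measure E).measurePreserving_homeomorphUnitSphereProd
  have hF : Measurable (fun p : sphere (0:E) 1 × Set.Ioi (0:ℝ) => f (p.2.1 • (p.1 : E))) := by
    fun_prop
  calc ∫⁻ x, f x = ∫⁻ x : ({(0)}ᶜ : Set E), f x.1 ∂((volume : Measure E).comap (↑)) := by
        rw [lintegral_subtype_comap (measurableSet_singleton _).compl fun x ↦ f x,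
          restrict_compl_singleton]
    _ = ∫⁻ p, f (p.2.1 • (p.1 : E)) ∂((volume : Measure E).toSphere.prod
          (.volumeIoiPow (Module.finrank ℝ E - 1))) := by
        rw [← h.lintegral_comp hF]
        refine lintegral_congr fun x => ?_
        have hx : ‖(x : E)‖ ≠ 0 := norm_ne_zero_iff.2 x.2
        simp [smul_smul, hx]
    _ = ∫⁻ θ, (∫⁻ r, f (r.1 • (θ : E)) ∂(Measure.volumeIoiPow (Module.finrank ℝ E - 1)))
          ∂(volume : Measure E).toSphere := by
        rw [lintegral_prod _ hF.aemeasurable]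
    _ = _ := by
        refine lintegral_congr fun θ => ?_
        rw [Measure.volumeIoiPow, lintegral_withDensity_eq_lintegral_mul _ (by fun_prop)
          (by fun_prop)]
        exact lintegral_subtype_comap measurableSet_Ioi
          (fun r : ℝ => ENNReal.ofReal (r ^ (Module.finrank ℝ E - 1)) * f (r • (θ : E)))

/-- cutoff with logarithmic mass one -/
def auxK (r : ℝ) : ℝ≥0∞ := Set.indicator (Set.Ioc 1 (Real.exp 1)) 1 r

lemma auxK_meas : Measurable auxK := measurable_one.indicator measurableSet_Ioc

lemma auxK_int (c : ℝ) (hc : 0 < c) :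
    ∫⁻ r in Set.Ioi (0:ℝ), ENNReal.ofReal (r⁻¹) * auxK (r * c) = 1 := by
  have h1 : ∀ r : ℝ, ENNReal.ofReal (r⁻¹) * auxK (r * c) =
      Set.indicator (Set.Ioc (1 / c) (Real.exp 1 / c)) (fun r => ENNReal.ofReal r⁻¹) r := by
    intro r
    simp only [auxK, Set.indicator_apply, Set.mem_Ioc, div_lt_iff₀ hc, le_div_iff₀ hc]
    split_ifs <;> simp
  simp_rw [h1]
  rw [setLIntegral_indicator measurableSet_Ioc]
  have h0 : 0 < 1 / c := by positivity
  have hle : 1 / c ≤ Real.exp 1 / c := by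
    gcongr; exact Real.one_le_exp (by norm_num)
  have h2 : Set.Ioc (1 / c) (Real.exp 1 / c) ∩ Set.Ioi 0 = Set.Ioc (1 / c) (Real.exp 1 / c) :=
    Set.inter_eq_left.2 fun x hx => h0.trans hx.1
  have hni : (0:ℝ) ∉ Set.uIcc (1 / c) (Real.exp 1 / c) := by
    rw [Set.uIcc_of_le hle]; exact fun h => absurd h.1 (not_le.2 h0)
  rw [h2, ← ofReal_integral_eq_lintegral_ofReal, ← intervalIntegral.integral_of_le hle,
    integral_inv hni]
  · have : Real.exp 1 / c / (1 / c) = Real.exp 1 := by field_simp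
    rw [this]; simp
  · exact (intervalIntegral.intervalIntegrable_inv (fun x hx h => hni (h ▸ hx))
      continuousOn_id).1
  · filter_upwards [ae_restrict_mem measurableSet_Ioc] with y hy
    exact inv_nonneg.2 (h0.trans hy.1).le

lemma aux_inv (a : ℝ) (ha : a ≠ 0) (h : ℝ → ℝ≥0∞) :
    ∫⁻ s : ℝ, ENNReal.ofReal |s|⁻¹ * h (-(a / s)) = ∫⁻ t : ℝ, ENNReal.ofReal |t|⁻¹ * h t := by
  have him : (fun s : ℝ => -(a / s)) '' {0}ᶜ = {0}ᶜ := by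
    ext t
    simp only [Set.mem_image, Set.mem_compl_iff, Set.mem_singleton_iff]
    constructor
    · rintro ⟨s, hs, rfl⟩; simp [ha, hs]
    · intro ht; exact ⟨-(a / t), by simp [ha, ht], by field_simp⟩
  have key := lintegral_image_eq_lintegral_abs_deriv_mul (s := ({0}ᶜ : Set ℝ))
    (f := fun s : ℝ => -(a / s)) (f' := fun s => a / s ^ 2) (measurableSet_singleton _).compl
    (fun x hx => by
      have hx : x ≠ 0 := hx
      have := ((hasDerivAt_inv hx).const_mul a).neg.hasDerivWithinAt (s := ({0}ᶜ : Set ℝ))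
      refine this.congr_deriv ?_
      ring)
    (fun x hx y hy hxy => by
      have hx : x ≠ 0 := hx
      have hy : y ≠ 0 := hy
      simp only [neg_inj] at hxy
      field_simp at hxy
      exact hxy.symm)
    (fun t => ENNReal.ofReal |t|⁻¹ * h t)
  rw [him] at key
  rw [← restrict_compl_singleton (μ := (volume : Measure ℝ)) 0, key]
  refine setLIntegral_congr_fun (measurableSet_singleton _).compl fun s hs => ?_
  have hs : s ≠ 0 := hs
  rw [← mul_assoc, ← ENNReal.ofReal_mul (abs_nonneg _)]
  congr 2
  rw [abs_neg, ← abs_inv, ← abs_inv, ← abs_mul]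
  congr 1
  field_simp

lemma aux_ind (b c : ℝ) (hc : c ≠ 0) :
    ∫⁻ t : ℝ, Set.indicator (Set.Ioc (0:ℝ) 1) (1 : ℝ → ℝ≥0∞) (b + t * c) =
      ENNReal.ofReal |c|⁻¹ := by
  have h : ∀ t : ℝ, Set.indicator (Set.Ioc (0:ℝ) 1) (1 : ℝ → ℝ≥0∞) (b + t * c) =
      Set.indicator ((· * c) ⁻¹' (Set.Ioc (-b) (1 - b))) (1 : ℝ → ℝ≥0∞) t := by
    intro t
    have : (b + t * c ∈ Set.Ioc (0:ℝ) 1) ↔ t ∈ ((· * c) ⁻¹' (Set.Ioc (-b) (1 - b))) := by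
      simp only [Set.mem_Ioc, Set.mem_preimage]
      constructor <;> rintro ⟨h1, h2⟩ <;> constructor <;> linarith
    by_cases ht : b + t * c ∈ Set.Ioc (0:ℝ) 1
    · rw [Set.indicator_of_mem ht, Set.indicator_of_mem (this.1 ht)]; rfl
    · rw [Set.indicator_of_notMem ht, Set.indicator_of_notMem (fun h => ht (this.2 h))]
  have hms : MeasurableSet ((· * c) ⁻¹' (Set.Ioc (-b) (1 - b))) :=
    (measurable_id.mul_const c) measurableSet_Ioc
  simp_rw [h]
  rw [lintegral_indicator_one hms,
    Real.volume_preimage_mul_right hc]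
  simp [abs_inv]

lemma aux_hyper (w e : E) (hw : ‖w‖ = 1) (he : ‖e‖ = 1) (hwe : inner ℝ w e ≠ 0)
    (Φ : E → ℝ≥0∞) (hΦ : Measurable Φ) :
    ∫⁻ y : (ℝ ∙ w)ᗮ, Φ y = ENNReal.ofReal |inner ℝ w e|⁻¹ *
      ∫⁻ y : (ℝ ∙ e)ᗮ, Φ ((y : E) + (-(inner ℝ w (y : E) / inner ℝ w e)) • e) := by
  set c := inner ℝ w e with hc
  set Ψ : E → ℝ≥0∞ := fun x => Φ (x + (-(inner ℝ w x / c)) • e) *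
    Set.indicator (Set.Ioc (0:ℝ) 1) 1 (inner ℝ w x) with hΨ
  have hI : Measurable (Set.indicator (Set.Ioc (0:ℝ) 1) (1 : ℝ → ℝ≥0∞)) :=
    measurable_one.indicator measurableSet_Ioc
  have hΨm : Measurable Ψ := by
    refine (hΦ.comp (by fun_prop)).mul (hI.comp (by fun_prop))
  have h1 := aux_lint_decomp e he Ψ hΨm
  have h2 := aux_lint_decomp' w hw Ψ hΨm
  have e1 : ∫⁻ x, Ψ x = ENNReal.ofReal |c|⁻¹ *
      ∫⁻ y : (ℝ ∙ e)ᗮ, Φ ((y : E) + (-(inner ℝ w (y : E) / c)) • e) := by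
    rw [h1, mul_comm, ← lintegral_mul_const _ (by fun_prop)]
    refine lintegral_congr fun y => ?_
    rw [← aux_ind (inner ℝ w (y : E)) c hwe, ← lintegral_const_mul _ (by fun_prop)]
    refine lintegral_congr fun s => ?_
    have hin : inner ℝ w ((y : E) + s • e) = inner ℝ w (y : E) + s * c := by
      rw [inner_add_right, inner_smul_right]
    simp only [hΨ, hin]
    congr 2
    rw [add_div, mul_div_cancel_right₀ _ hwe]
    module
  have e2 : ∫⁻ x, Ψ x = ∫⁻ y : (ℝ ∙ w)ᗮ, Φ y := by
    rw [h2]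
    have hmem : w - c⁻¹ • e ∈ (ℝ ∙ w)ᗮ := by
      rw [Submodule.mem_orthogonal_singleton_iff_inner_right, inner_sub_right, inner_smul_right,
        ← hc, inv_mul_cancel₀ hwe, real_inner_self_eq_norm_sq, hw]
      norm_num
    have hs : ∀ s : ℝ, ∫⁻ y : (ℝ ∙ w)ᗮ, Ψ ((y : E) + s • w) =
        (∫⁻ y : (ℝ ∙ w)ᗮ, Φ y) * Set.indicator (Set.Ioc (0:ℝ) 1) 1 s := by
      intro s
      rw [← lintegral_add_right_eq_self (fun y : (ℝ ∙ w)ᗮ => Φ y) (s • ⟨_, hmem⟩),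
        ← lintegral_mul_const _ (by fun_prop)]
      refine lintegral_congr fun y => ?_
      have hin : inner ℝ w ((y : E) + s • w) = s := by
        rw [inner_add_right, inner_smul_right, real_inner_self_eq_norm_sq, hw,
          Submodule.mem_orthogonal_singleton_iff_inner_right.1 y.2]
        norm_num
      simp only [hΨ, hin]
      congr 2
      push_cast
      rw [div_eq_mul_inv]
      module
    simp_rw [hs]
    rw [lintegral_const_mul _ hI, lintegral_indicator_one measurableSet_Ioc]
    simp
  rw [← e1, e2]

lemma aux_polarK [Nontrivial E] (d : ℕ) (hd : Module.finrank ℝ E = d) (ψ : E → ℝ≥0∞)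
    (hψm : Measurable ψ) (hψ : ∀ r : ℝ, 0 < r → ∀ x, ψ (r • x) = ψ x) (N : E → ℝ)
    (hNm : Measurable N) (hN : ∀ r : ℝ, 0 < r → ∀ x, N (r • x) = r * N x)
    (hpos : ∀ x, x ≠ 0 → 0 < N x) :
    ∫⁻ x, ψ x * ENNReal.ofReal (‖x‖⁻¹ ^ d) * auxK (N x) =
      ∫⁻ θ, ψ (θ : E) ∂(volume : Measure E).toSphere := by
  have hK := auxK_meas
  rw [aux_polar _ (by fun_prop)]
  refine lintegral_congr fun θ => ?_
  have hθ : ‖(θ : E)‖ = 1 := by simp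
  have hθ0 : (θ : E) ≠ 0 := by intro h; simp [h] at hθ
  have hd1 : 1 ≤ d := by rw [← hd]; exact Module.finrank_pos
  calc _ = ∫⁻ r in Set.Ioi (0:ℝ), ψ θ * (ENNReal.ofReal r⁻¹ * auxK (r * N θ)) := by
        refine setLIntegral_congr_fun measurableSet_Ioi fun r hr => ?_
        have hr : 0 < r := hr
        rw [hψ r hr, hN r hr, norm_smul, hθ, mul_one, Real.norm_of_nonneg hr.le, hd]
        have : ENNReal.ofReal r⁻¹ = ENNReal.ofReal (r ^ (d - 1)) * ENNReal.ofReal (r⁻¹ ^ d) := by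
          rw [← ENNReal.ofReal_mul (by positivity)]
          congr 1
          obtain ⟨k, rfl⟩ : ∃ k, d = k + 1 := ⟨d - 1, by omega⟩
          simp only [Nat.add_sub_cancel]
          rw [inv_pow, pow_succ]
          field_simp
        rw [this]
        ring
    _ = ψ θ := by
        rw [lintegral_const_mul _ (by fun_prop), auxK_int _ (hpos _ hθ0), mul_one]

open scoped Pointwise in
lemma aux_null [Nontrivial E] (S : Submodule ℝ E) (hS : S ≠ ⊤) :
    ∀ᵐ w : sphere (0:E) 1 ∂(volume : Measure E).toSphere, (w : E) ∉ S := by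
  have hm : MeasurableSet {w : sphere (0:E) 1 | (w : E) ∈ S} :=
    (S.closed_of_finiteDimensional.measurableSet).preimage measurable_subtype_coe
  rw [ae_iff]
  simp only [not_not]
  rw [Measure.toSphere_apply' _ hm]
  have : (volume : Measure E) (Set.Ioo (0:ℝ) 1 • (Subtype.val '' {w : sphere (0:E) 1 | (w : E) ∈ S})) = 0 := by
    refine measure_mono_null ?_ (Measure.addHaar_submodule volume S hS)
    rintro x hx
    obtain ⟨r, hr, y, ⟨w, hw, rfl⟩, rfl⟩ := Set.mem_smul.1 hx
    exact S.smul_mem r hw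
  rw [this, mul_zero]

lemma aux_finrank (n : ℕ) (hd : Module.finrank ℝ E = n + 1) (e : E) (he : ‖e‖ = 1) :
    Module.finrank ℝ (ℝ ∙ e)ᗮ = n := by
  have : Fact (Module.finrank ℝ E = n + 1) := ⟨hd⟩
  exact Submodule.finrank_orthogonal_span_singleton (by intro h; simp [h] at he)

lemma aux_swap (n : ℕ) (hn : 1 ≤ n) (hd : Module.finrank ℝ E = n + 1) (e : E) (he : ‖e‖ = 1)
    (Φ : E → ℝ≥0∞) (hΦ : Measurable Φ) :
    (∫⁻ z : (ℝ ∙ e)ᗮ, ∫⁻ s : ℝ, ENNReal.ofReal (‖z‖⁻¹ ^ n) * (ENNReal.ofReal |s|⁻¹ *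
      (auxK ‖(z : E) + s • e‖ *
        ∫⁻ y : (ℝ ∙ e)ᗮ, Φ ((y : E) + (-(inner ℝ (z : E) (y : E) / s)) • e)))) =
      (∫⁻ x, Φ x * ENNReal.ofReal |inner ℝ e x|⁻¹) *
        (volume : Measure (ℝ ∙ e)ᗮ).toSphere Set.univ := by
  have hK := auxK_meas
  have hfr := aux_finrank n hd e he
  have hnt : Nontrivial (ℝ ∙ e)ᗮ := Module.nontrivial_of_finrank_pos (R := ℝ) (by omega)
  have hz0 : ∀ᵐ z : (ℝ ∙ e)ᗮ, z ≠ 0 := by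
    simp [ae_iff]
  calc _ = ∫⁻ z : (ℝ ∙ e)ᗮ, ∫⁻ s : ℝ, ∫⁻ y : (ℝ ∙ e)ᗮ,
        ENNReal.ofReal (‖z‖⁻¹ ^ n) * (ENNReal.ofReal |s|⁻¹ * (auxK ‖(z : E) + s • e‖ *
        Φ ((y : E) + (-(inner ℝ (z : E) (y : E) / s)) • e))) := by
        refine lintegral_congr fun z => lintegral_congr fun s => ?_
        rw [← lintegral_const_mul _ (by fun_prop), ← lintegral_const_mul _ (by fun_prop),
          ← lintegral_const_mul _ (by fun_prop)]
    _ = ∫⁻ z : (ℝ ∙ e)ᗮ, ∫⁻ y : (ℝ ∙ e)ᗮ, ∫⁻ s : ℝ,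
        ENNReal.ofReal (‖z‖⁻¹ ^ n) * (ENNReal.ofReal |s|⁻¹ * (auxK ‖(z : E) + s • e‖ *
        Φ ((y : E) + (-(inner ℝ (z : E) (y : E) / s)) • e))) := by
        refine lintegral_congr fun z => ?_
        rw [lintegral_lintegral_swap]
        refine Measurable.aemeasurable ?_
        simp only [Function.uncurry_def]
        fun_prop
    _ = ∫⁻ z : (ℝ ∙ e)ᗮ, ∫⁻ y : (ℝ ∙ e)ᗮ, ∫⁻ t : ℝ,
        ENNReal.ofReal (‖z‖⁻¹ ^ n) * (ENNReal.ofReal |t|⁻¹ *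
        (auxK ‖(z : E) + (-(inner ℝ (z : E) (y : E) / t)) • e‖ * Φ ((y : E) + t • e))) := by
        refine lintegral_congr_ae ?_
        filter_upwards [hz0] with z hz
        refine lintegral_congr_ae ?_
        have hy0 : ∀ᵐ y : (ℝ ∙ e)ᗮ, y ∉ (ℝ ∙ z)ᗮ := by
          rw [ae_iff]
          simp only [not_not]
          refine Measure.addHaar_submodule volume ((ℝ ∙ z)ᗮ) fun h => hz ?_
          have : z ∈ (ℝ ∙ z)ᗮ := h ▸ Submodule.mem_top
          rw [Submodule.mem_orthogonal_singleton_iff_inner_right] at this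
          exact inner_self_eq_zero.1 this
        filter_upwards [hy0] with y hy
        rw [Submodule.mem_orthogonal_singleton_iff_inner_right, Submodule.coe_inner] at hy
        rw [lintegral_const_mul _ (by fun_prop), lintegral_const_mul _ (by fun_prop)]
        congr 1
        rw [← aux_inv _ hy]
        refine lintegral_congr fun s => ?_
        by_cases hs : s = 0
        · simp [hs]
        · congr 4
          field_simp
    _ = ∫⁻ y : (ℝ ∙ e)ᗮ, ∫⁻ z : (ℝ ∙ e)ᗮ, ∫⁻ t : ℝ,
        ENNReal.ofReal (‖z‖⁻¹ ^ n) * (ENNReal.ofReal |t|⁻¹ *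
        (auxK ‖(z : E) + (-(inner ℝ (z : E) (y : E) / t)) • e‖ * Φ ((y : E) + t • e))) := by
        rw [lintegral_lintegral_swap]
        refine Measurable.aemeasurable ?_
        simp only [Function.uncurry_def]
        refine Measurable.lintegral_prod_right' (f := fun p : ((ℝ ∙ e)ᗮ × (ℝ ∙ e)ᗮ) × ℝ =>
          ENNReal.ofReal (‖p.1.1‖⁻¹ ^ n) * (ENNReal.ofReal |p.2|⁻¹ *
          (auxK ‖(p.1.1 : E) + (-(inner ℝ (p.1.1 : E) (p.1.2 : E) / p.2)) • e‖ *
            Φ ((p.1.2 : E) + p.2 • e)))) ?_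
        fun_prop
    _ = ∫⁻ y : (ℝ ∙ e)ᗮ, ∫⁻ t : ℝ, ∫⁻ z : (ℝ ∙ e)ᗮ,
        ENNReal.ofReal (‖z‖⁻¹ ^ n) * (ENNReal.ofReal |t|⁻¹ *
        (auxK ‖(z : E) + (-(inner ℝ (z : E) (y : E) / t)) • e‖ * Φ ((y : E) + t • e))) := by
        refine lintegral_congr fun z => ?_
        rw [lintegral_lintegral_swap]
        refine Measurable.aemeasurable ?_
        simp only [Function.uncurry_def]
        fun_prop
    _ = ∫⁻ y : (ℝ ∙ e)ᗮ, ∫⁻ t : ℝ, Φ ((y : E) + t • e) *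
        ENNReal.ofReal |inner ℝ e ((y : E) + t • e)|⁻¹ *
          (volume : Measure (ℝ ∙ e)ᗮ).toSphere Set.univ := by
        refine lintegral_congr fun y => lintegral_congr fun t => ?_
        have hin : inner ℝ e ((y : E) + t • e) = t := by
          rw [inner_add_right, inner_smul_right, real_inner_self_eq_norm_sq, he,
            Submodule.mem_orthogonal_singleton_iff_inner_right.1 y.2]
          norm_num
        rw [hin]
        have hp := aux_polarK (E := (ℝ ∙ e)ᗮ) n hfr (fun _ => 1) measurable_const
          (fun _ _ _ => rfl)
          (fun z => ‖(z : E) + (-(inner ℝ (z : E) (y : E) / t)) • e‖) (by fun_prop)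
          (fun r hr z => by
            have : ((r • z : (ℝ ∙ e)ᗮ) : E) +
                (-(inner ℝ ((r • z : (ℝ ∙ e)ᗮ) : E) (y : E) / t)) • e =
                r • ((z : E) + (-(inner ℝ (z : E) (y : E) / t)) • e) := by
              rw [Submodule.coe_smul, inner_smul_left, smul_add, smul_smul]
              simp only [conj_trivial]
              congr 2
              ring
            rw [this, norm_smul, Real.norm_of_nonneg hr.le])
          (fun z hz => by
            rw [norm_pos_iff]
            intro h
            apply hz
            have h2 : inner ℝ (z : E) ((z : E) + (-(inner ℝ (z : E) (y : E) / t)) • e) = 0 := by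
              rw [h, inner_zero_right]
            rw [inner_add_right, inner_smul_right,
              Submodule.mem_orthogonal_singleton_iff_inner_left.1 z.2, mul_zero, add_zero] at h2
            exact Subtype.ext (inner_self_eq_zero.1 h2))
        rw [lintegral_one] at hp
        rw [← hp, ← lintegral_const_mul _ (by fun_prop)]
        refine lintegral_congr fun z => ?_
        ring
    _ = _ := by
        rw [aux_lint_decomp e he _ (by fun_prop), ← lintegral_mul_const _ (by fun_prop)]
        refine lintegral_congr fun y => ?_
        rw [lintegral_mul_const _ (by fun_prop)]

lemma aux_core (n : ℕ) (hn : 1 ≤ n) (hd : Module.finrank ℝ E = n + 1) (e : E) (he : ‖e‖ = 1)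
    (φ : E → ℝ≥0∞) (hφm : Measurable φ) (hφ : ∀ r : ℝ, 0 < r → ∀ x, φ (r • x) = φ x) :
    ∫⁻ w, ENNReal.ofReal (‖(w : E) - (inner ℝ (w : E) e) • e‖⁻¹ ^ n) *
      (∫⁻ v, φ ((v : (ℝ ∙ (w : E))ᗮ) : E) ∂(volume : Measure (ℝ ∙ (w : E))ᗮ).toSphere)
        ∂(volume : Measure E).toSphere =
      (∫⁻ θ, φ (θ : E) * ENNReal.ofReal |inner ℝ e (θ : E)|⁻¹ ∂(volume : Measure E).toSphere) *
        (volume : Measure (ℝ ∙ e)ᗮ).toSphere Set.univ := by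
  have hK := auxK_meas
  have hntE : Nontrivial E := Module.nontrivial_of_finrank_pos (R := ℝ) (by omega)
  set Φ : E → ℝ≥0∞ := fun x => φ x * ENNReal.ofReal (‖x‖⁻¹ ^ n) * auxK ‖x‖ with hΦ
  have hΦm : Measurable Φ := by fun_prop
  have hΦm2 : Measurable (fun x : E × (ℝ ∙ e)ᗮ =>
    Φ ((x.2 : E) + (-(inner ℝ x.1 (x.2 : E) / inner ℝ x.1 e)) • e)) := by fun_prop
  have hint : Measurable (fun x : E => ∫⁻ y : (ℝ ∙ e)ᗮ,
    Φ ((y : E) + (-(inner ℝ x (y : E) / inner ℝ x e)) • e)) := hΦm2.lintegral_prod_right'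
  set ψ : E → ℝ≥0∞ := fun x =>
    ENNReal.ofReal (‖x‖ ^ (n + 1) * ‖x - (inner ℝ x e) • e‖⁻¹ ^ n * |inner ℝ x e|⁻¹) *
    ∫⁻ y : (ℝ ∙ e)ᗮ, Φ ((y : E) + (-(inner ℝ x (y : E) / inner ℝ x e)) • e) with hψ
  have hψm : Measurable ψ := by fun_prop
  have hne : (ℝ ∙ e)ᗮ ≠ ⊤ := by
    intro h
    have : e ∈ (ℝ ∙ e)ᗮ := h ▸ Submodule.mem_top
    rw [Submodule.mem_orthogonal_singleton_iff_inner_right, real_inner_self_eq_norm_sq, he] at this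
    norm_num at this
  calc _ = ∫⁻ w, ψ (w : E) ∂(volume : Measure E).toSphere := by
        refine lintegral_congr_ae ?_
        filter_upwards [aux_null _ hne] with w hw
        rw [Submodule.mem_orthogonal_singleton_iff_inner_left] at hw
        have hw1 : ‖(w : E)‖ = 1 := by simp
        have hfr := aux_finrank n hd (w : E) hw1
        have hnt : Nontrivial (ℝ ∙ (w : E))ᗮ :=
          Module.nontrivial_of_finrank_pos (R := ℝ) (by omega)
        have h1 := aux_polarK (E := (ℝ ∙ (w : E))ᗮ) n hfr (fun y => φ (y : E)) (by fun_prop)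
          (fun r hr x => hφ r hr x) (fun y => ‖y‖) (by fun_prop)
          (fun r hr x => by rw [norm_smul, Real.norm_of_nonneg hr.le])
          (fun x hx => norm_pos_iff.2 hx)
        rw [← h1]
        have h2 := aux_hyper (w : E) e hw1 he hw Φ hΦm
        have h3 : ∫⁻ x : (ℝ ∙ (w : E))ᗮ, φ (x : E) * ENNReal.ofReal (‖x‖⁻¹ ^ n) * auxK ‖x‖ =
          ∫⁻ x : (ℝ ∙ (w : E))ᗮ, Φ x := rfl
        rw [h3, h2, ← mul_assoc, ← ENNReal.ofReal_mul (by positivity)]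
        simp only [hψ, hw1, one_pow, one_mul]
    _ = ∫⁻ x, ψ x * ENNReal.ofReal (‖x‖⁻¹ ^ (n + 1)) * auxK ‖x‖ := by
        refine (aux_polarK (n + 1) hd ψ hψm ?_ (fun y => ‖y‖) (by fun_prop)
          (fun r hr x => by rw [norm_smul, Real.norm_of_nonneg hr.le])
          (fun x hx => norm_pos_iff.2 hx)).symm
        intro r hr x
        simp only [hψ]
        congr 1
        · congr 1
          have : r • x - (inner ℝ (r • x) e) • e = r • (x - (inner ℝ x e) • e) := by
            rw [inner_smul_left, smul_sub, smul_smul]; simp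
          rw [this, norm_smul, norm_smul, Real.norm_of_nonneg hr.le, inner_smul_left]
          simp only [conj_trivial]
          rw [abs_mul, abs_of_pos hr, mul_inv, mul_inv, mul_pow, mul_pow, inv_pow r, pow_succ r]
          field_simp
        · refine lintegral_congr fun y => ?_
          rw [inner_smul_left, inner_smul_left]
          simp only [conj_trivial]
          rw [mul_div_mul_left _ _ hr.ne']
    _ = ∫⁻ z : (ℝ ∙ e)ᗮ, ∫⁻ s : ℝ, ENNReal.ofReal (‖z‖⁻¹ ^ n) * (ENNReal.ofReal |s|⁻¹ *
      (auxK ‖(z : E) + s • e‖ *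
        ∫⁻ y : (ℝ ∙ e)ᗮ, Φ ((y : E) + (-(inner ℝ (z : E) (y : E) / s)) • e))) := by
        rw [aux_lint_decomp e he _ (by fun_prop)]
        refine lintegral_congr fun z => lintegral_congr fun s => ?_
        have hin : inner ℝ ((z : E) + s • e) e = s := by
          rw [inner_add_left, inner_smul_left, real_inner_self_eq_norm_sq, he,
            Submodule.mem_orthogonal_singleton_iff_inner_left.1 z.2]
          norm_num
        simp only [hψ, hin, add_sub_cancel_right]
        by_cases hs : s = 0
        · simp [hs]
        have hne0 : ‖(z : E) + s • e‖ ≠ 0 := by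
          rw [norm_ne_zero_iff]
          intro h
          rw [h, inner_zero_left] at hin
          exact hs hin.symm
        have hA : ∀ y : (ℝ ∙ e)ᗮ, inner ℝ ((z : E) + s • e) (y : E) = inner ℝ (z : E) (y : E) := by
          intro y
          rw [inner_add_left, inner_smul_left,
            Submodule.mem_orthogonal_singleton_iff_inner_right.1 y.2, mul_zero, add_zero]
        simp_rw [hA]
        have hB : ENNReal.ofReal (‖(z : E) + s • e‖ ^ (n + 1) * ‖(z : E)‖⁻¹ ^ n * |s|⁻¹) *
            ENNReal.ofReal (‖(z : E) + s • e‖⁻¹ ^ (n + 1)) =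
            ENNReal.ofReal (‖z‖⁻¹ ^ n) * ENNReal.ofReal |s|⁻¹ := by
          rw [← ENNReal.ofReal_mul (by positivity), ← ENNReal.ofReal_mul (by positivity)]
          congr 1
          rw [Submodule.coe_norm, inv_pow ‖(z : E) + s • e‖]
          field_simp
        rw [← mul_assoc (ENNReal.ofReal (‖z‖⁻¹ ^ n)), ← hB]
        ring
    _ = (∫⁻ x, Φ x * ENNReal.ofReal |inner ℝ e x|⁻¹) *
        (volume : Measure (ℝ ∙ e)ᗮ).toSphere Set.univ := aux_swap n hn hd e he Φ hΦm
    _ = _ := by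
        congr 1
        have h := aux_polarK (n + 1) hd
          (fun x => φ x * ENNReal.ofReal (‖x‖ * |inner ℝ e x|⁻¹)) (by fun_prop)
          (fun r hr x => by
            simp only [hφ r hr x, norm_smul, Real.norm_of_nonneg hr.le, inner_smul_right, abs_mul,
              abs_of_pos hr, mul_inv]
            congr 2
            field_simp)
          (fun y => ‖y‖) (by fun_prop)
          (fun r hr x => by rw [norm_smul, Real.norm_of_nonneg hr.le])
          (fun x hx => norm_pos_iff.2 hx)
        have h2 : ∀ θ : sphere (0:E) 1, φ (θ : E) * ENNReal.ofReal |inner ℝ e (θ : E)|⁻¹ =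
            φ (θ : E) * ENNReal.ofReal (‖(θ : E)‖ * |inner ℝ e (θ : E)|⁻¹) := by
          intro θ; simp
        simp_rw [h2]
        rw [← h]
        refine lintegral_congr fun x => ?_
        simp only [hΦ]
        by_cases hx : x = 0
        · simp [hx]
        have hx : ‖x‖ ≠ 0 := norm_ne_zero_iff.2 hx
        have hB : ENNReal.ofReal (‖x‖⁻¹ ^ n) * ENNReal.ofReal |inner ℝ e x|⁻¹ =
            ENNReal.ofReal (‖x‖ * |inner ℝ e x|⁻¹) * ENNReal.ofReal (‖x‖⁻¹ ^ (n + 1)) := by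
          rw [← ENNReal.ofReal_mul (by positivity), ← ENNReal.ofReal_mul (by positivity)]
          congr 1
          rw [pow_succ]
          field_simp
        calc _ = φ x * (ENNReal.ofReal (‖x‖⁻¹ ^ n) * ENNReal.ofReal |inner ℝ e x|⁻¹) * auxK ‖x‖ := by
              ring
          _ = _ := by rw [hB]; ring
end aux

lemma aux_sphere_const {n : ℕ} (e w : EuclideanSpace ℝ (Fin (n + 1))) (hn : 1 ≤ n)
    (he : ‖e‖ = 1) (hw : ‖w‖ = 1) :
    (volume : Measure (ℝ ∙ w)ᗮ).toSphere Set.univ =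
      (volume : Measure (ℝ ∙ e)ᗮ).toSphere Set.univ := by
  have h1 := aux_finrank n (by simp) e he
  have h2 := aux_finrank n (by simp) w hw
  have : Nontrivial (ℝ ∙ w)ᗮ := Module.nontrivial_of_finrank_pos (R := ℝ) (by omega)
  have : Nontrivial (ℝ ∙ e)ᗮ := Module.nontrivial_of_finrank_pos (R := ℝ) (by omega)
  rw [Measure.toSphere_apply_univ, Measure.toSphere_apply_univ, InnerProductSpace.volume_ball,
    InnerProductSpace.volume_ball, h1, h2]

lemma aux_weight (k : ℕ) (a : ℝ) (ha : 0 < a) :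
    ENNReal.ofReal (a ^ 2) ^ (-(((k + 1 : ℕ) : ℝ) - 1) / 2) = ENNReal.ofReal (a⁻¹ ^ k) := by
  rw [ENNReal.ofReal_rpow_of_pos (by positivity)]
  congr 1
  rw [← Real.rpow_natCast a 2, ← Real.rpow_mul ha.le, ← Real.rpow_natCast a⁻¹,
    Real.inv_rpow ha.le, ← Real.rpow_neg ha.le]
  congr 1
  push_cast
  ring

/-- degree-zero homogeneous extension -/
def auxProj {E : Type*} [NormedAddCommGroup E] [NormedSpace ℝ E] (e : sphere (0:E) 1) (x : E) :
    sphere (0:E) 1 := by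
  classical
  exact ⟨if x = 0 then e else ‖x‖⁻¹ • x, by
    split_ifs with h
    · exact e.2
    · have : ‖x‖ ≠ 0 := norm_ne_zero_iff.2 h
      simp [norm_smul, this]⟩

lemma auxProj_meas {E : Type*} [NormedAddCommGroup E] [NormedSpace ℝ E] [MeasurableSpace E]
    [BorelSpace E] [SecondCountableTopology E] (e : sphere (0:E) 1) : Measurable (auxProj e) := by
  classical
  refine Measurable.subtype_mk (Measurable.ite (measurableSet_singleton (0:E)) measurable_const ?_)
  fun_prop

lemma auxProj_smul {E : Type*} [NormedAddCommGroup E] [NormedSpace ℝ E] (e : sphere (0:E) 1)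
    (r : ℝ) (hr : 0 < r) (x : E) : auxProj e (r • x) = auxProj e x := by
  apply Subtype.ext
  by_cases hx : x = 0
  · simp [auxProj, hx]
  · have : ‖x‖ ≠ 0 := norm_ne_zero_iff.2 hx
    simp only [auxProj, hx, smul_eq_zero, hr.ne', or_self, if_false, norm_smul,
      Real.norm_of_nonneg hr.le, smul_smul]
    congr 1
    field_simp

lemma auxProj_self {E : Type*} [NormedAddCommGroup E] [NormedSpace ℝ E] (e : sphere (0:E) 1)
    (x : E) (hx : ‖x‖ = 1) (h : x ∈ sphere (0:E) 1) : auxProj e x = ⟨x, h⟩ := by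
  apply Subtype.ext
  have : x ≠ 0 := by intro h; simp [h] at hx
  simp [auxProj, this, hx]

lemma aux_final (k : ℕ) (hk : 2 ≤ k) (i : Fin (k + 1))
    (φ : sphere (0 : EuclideanSpace ℝ (Fin (k + 1))) 1 → ℝ≥0∞) (hφ : Measurable φ) (b : ℝ) :
    (∫⁻ w, ENNReal.ofReal b * Funk (k + 1) φ w *
        ENNReal.ofReal (1 - ((w : EuclideanSpace ℝ (Fin (k + 1))) i) ^ 2) ^
          (-(((k + 1 : ℕ) : ℝ) - 1) / 2) ∂(sphMeasure (k + 1))) =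
      ENNReal.ofReal b *
        ∫⁻ θ, φ θ * ENNReal.ofReal |(θ : EuclideanSpace ℝ (Fin (k + 1))) i| ^ (-1 : ℝ)
          ∂(sphMeasure (k + 1)) := by
  set e : EuclideanSpace ℝ (Fin (k + 1)) := EuclideanSpace.single i 1 with he_def
  have he : ‖e‖ = 1 := by simp [he_def]
  have hfrE : Module.finrank ℝ (EuclideanSpace ℝ (Fin (k + 1))) = k + 1 := by simp
  have hinr : ∀ x : EuclideanSpace ℝ (Fin (k + 1)), inner ℝ x e = x i := by
    intro x; rw [he_def, EuclideanSpace.inner_single_right]; simp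
  have hinl : ∀ x : EuclideanSpace ℝ (Fin (k + 1)), inner ℝ e x = x i := by
    intro x; rw [real_inner_comm, hinr]
  set e' : sphere (0 : EuclideanSpace ℝ (Fin (k + 1))) 1 := ⟨e, by simpa using he⟩
  set σ := (volume : Measure (ℝ ∙ e)ᗮ).toSphere Set.univ with hσ
  have hfr := aux_finrank k hfrE e he
  have hnt : Nontrivial (ℝ ∙ e)ᗮ := Module.nontrivial_of_finrank_pos (R := ℝ) (by omega)
  have hσ0 : σ ≠ 0 := by
    rw [hσ, Ne, Measure.measure_univ_eq_zero]
    exact Measure.toSphere_ne_zero _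
  have hσt : σ ≠ ⊤ := measure_ne_top _ _
  have core := aux_core k (by omega) hfrE e he (fun x => φ (auxProj e' x))
    (hφ.comp (auxProj_meas e')) (fun r hr x => by rw [auxProj_smul e' r hr x])
  have hspan : (ℝ ∙ e) ≠ ⊤ := by
    intro h
    have h1 : Module.finrank ℝ (ℝ ∙ e) = 1 :=
      finrank_span_singleton (by intro h; simp [h] at he)
    rw [h, finrank_top, hfrE] at h1
    omega
  have hperp : (ℝ ∙ e)ᗮ ≠ ⊤ := by
    intro h
    have := Submodule.finrank_le (ℝ ∙ e)ᗮ
    rw [h, finrank_top, hfrE] at hfr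
    omega
  have hL : ∫⁻ w, ENNReal.ofReal b * Funk (k + 1) φ w *
        ENNReal.ofReal (1 - ((w : EuclideanSpace ℝ (Fin (k + 1))) i) ^ 2) ^
          (-(((k + 1 : ℕ) : ℝ) - 1) / 2)
          ∂(volume : Measure (EuclideanSpace ℝ (Fin (k + 1)))).toSphere =
      (ENNReal.ofReal b * σ⁻¹) *
      ∫⁻ w, ENNReal.ofReal (‖(w : EuclideanSpace ℝ (Fin (k + 1))) -
        (inner ℝ (w : EuclideanSpace ℝ (Fin (k + 1))) e) • e‖⁻¹ ^ k) *
      (∫⁻ v, φ (auxProj e' ((v : (ℝ ∙ (w : EuclideanSpace ℝ (Fin (k + 1))))ᗮ) :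
          EuclideanSpace ℝ (Fin (k + 1))))
        ∂(volume : Measure (ℝ ∙ (w : EuclideanSpace ℝ (Fin (k + 1))))ᗮ).toSphere)
        ∂(volume : Measure (EuclideanSpace ℝ (Fin (k + 1)))).toSphere := by
    rw [← lintegral_const_mul' _ _ (ENNReal.mul_ne_top ENNReal.ofReal_ne_top
      (ENNReal.inv_ne_top.2 hσ0))]
    refine lintegral_congr_ae ?_
    filter_upwards [aux_null _ hspan] with w hw
    have hw1 : ‖(w : EuclideanSpace ℝ (Fin (k + 1)))‖ = 1 := by simp
    have hpos : 0 < ‖(w : EuclideanSpace ℝ (Fin (k + 1))) -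
        (inner ℝ (w : EuclideanSpace ℝ (Fin (k + 1))) e) • e‖ := by
      rw [norm_pos_iff]
      intro h
      apply hw
      rw [sub_eq_zero.1 h]
      exact Submodule.smul_mem _ _ (Submodule.mem_span_singleton_self e)
    have hsq : 1 - ((w : EuclideanSpace ℝ (Fin (k + 1))) i) ^ 2 =
        ‖(w : EuclideanSpace ℝ (Fin (k + 1))) -
        (inner ℝ (w : EuclideanSpace ℝ (Fin (k + 1))) e) • e‖ ^ 2 := by
      rw [norm_sub_sq_real, inner_smul_right, norm_smul, hw1, he, hinr, mul_one,
        Real.norm_eq_abs, sq_abs]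
      ring
    rw [hsq, aux_weight k _ hpos, Funk, aux_sphere_const e w (by omega) he hw1, ← hσ]
    have hv : ∀ v : sphere (0 : (ℝ ∙ (w : EuclideanSpace ℝ (Fin (k + 1))))ᗮ) 1,
        ∀ h, φ ⟨((v : (ℝ ∙ (w : EuclideanSpace ℝ (Fin (k + 1))))ᗮ) :
          EuclideanSpace ℝ (Fin (k + 1))), h⟩ =
        φ (auxProj e' ((v : (ℝ ∙ (w : EuclideanSpace ℝ (Fin (k + 1))))ᗮ) :
          EuclideanSpace ℝ (Fin (k + 1)))) := by
      intro v h
      rw [auxProj_self e' _ (by simpa using h) h]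
    simp_rw [hv]
    ring
  have hR : ∫⁻ θ, φ θ * ENNReal.ofReal |(θ : EuclideanSpace ℝ (Fin (k + 1))) i| ^ (-1 : ℝ)
        ∂(volume : Measure (EuclideanSpace ℝ (Fin (k + 1)))).toSphere =
      ∫⁻ θ, φ (auxProj e' (θ : EuclideanSpace ℝ (Fin (k + 1)))) *
        ENNReal.ofReal |inner ℝ e (θ : EuclideanSpace ℝ (Fin (k + 1)))|⁻¹
        ∂(volume : Measure (EuclideanSpace ℝ (Fin (k + 1)))).toSphere := by
    refine lintegral_congr_ae ?_
    filter_upwards [aux_null _ hperp] with θ hθ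
    rw [Submodule.mem_orthogonal_singleton_iff_inner_right, hinl] at hθ
    rw [auxProj_self e' _ (by simp) θ.2, hinl, ENNReal.rpow_neg_one,
      ENNReal.ofReal_inv_of_pos (abs_pos.2 hθ)]
  rw [sphMeasure, lintegral_smul_measure, lintegral_smul_measure, hL, hR, core, ← hσ]
  simp only [smul_eq_mul]
  generalize (∫⁻ θ, φ (auxProj e' (θ : EuclideanSpace ℝ (Fin (k + 1)))) *
        ENNReal.ofReal |inner ℝ e (θ : EuclideanSpace ℝ (Fin (k + 1)))|⁻¹
        ∂(volume : Measure (EuclideanSpace ℝ (Fin (k + 1)))).toSphere) = X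
  have : ENNReal.ofReal b * σ⁻¹ * (X * σ) = ENNReal.ofReal b * X := by
    rw [show ENNReal.ofReal b * σ⁻¹ * (X * σ) = ENNReal.ofReal b * X * (σ⁻¹ * σ) by ring,
      ENNReal.inv_mul_cancel hσ0 hσt, mul_one]
  rw [this]
  ring

/-- Weighted identity for the `m`-th dual volumes `Ṽ_m(L ∩ w^⊥) = b_{n-1}(Fρ_L^m)(w)` of
central hyperplane sections of a star set (case `k = n-1`). -/
theorem stmt16 (n : ℕ) (hn : 3 ≤ n) (L : Set (EuclideanSpace ℝ (Fin n)))
    (hL : MeasurableSet L)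
    (hstar : ∀ x ∈ L, ∀ lam : ℝ, 0 ≤ lam → lam ≤ 1 → lam • x ∈ L)
    (hρ : Measurable (radial n L)) (m : ℝ) (hm : 0 < m) :
    (∫⁻ w, ENNReal.ofReal (ballVol (n - 1)) *
        Funk n (fun θ => radial n L θ ^ m) w *
        ENNReal.ofReal (1 - ((w : EuclideanSpace ℝ (Fin n)) ⟨n - 1, by omega⟩) ^ 2) ^
          (-((n : ℝ) - 1) / 2) ∂(sphMeasure n)) =
      ENNReal.ofReal (ballVol (n - 1)) *
        ∫⁻ θ, radial n L θ ^ m *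
          ENNReal.ofReal |(θ : EuclideanSpace ℝ (Fin n)) ⟨n - 1, by omega⟩| ^ (-1 : ℝ)
          ∂(sphMeasure n) := by
  obtain ⟨k, rfl⟩ : ∃ k, n = k + 1 := ⟨n - 1, by omega⟩
  exact aux_final k (by omega) _ _ (hρ.pow_const m) _
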